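/- arXiv:1602.06685 — 2 statements merged into one kernel-verified Lean document; each statement's English description precedes it below -/
import Mathlib

section
/- Let 0 ≤ t ≤ T−1 and fix ω^t ∈ Ω^t. Assume that for every h ∈ D^{t+1}(ω^t) with h ≠ 0 one has q_{t+1}(h·ΔS_{t+1}(ω^t,·) ≥ 0 | ω^t) < 1. Then 0 ∈ D^{t+1}(ω^t), and consequently D^{t+1}(ω^t) is a vector subspace of ℝ^d. -/
/-!
The set `D = Dset q S t ω` is a nonempty closed convex set: nonempty because `ℝ^d` is hereditarily
Lindelöf, so that the increment lies almost surely in its support (`ae_deltaS_mem_suppK`), and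
closed because affine subspaces of `ℝ^d` are closed. Let `p` be the point of `D` of least norm.
The variational inequality for the projection gives `⟪p, x⟫ ≥ ‖p‖² ≥ 0` for all `x ∈ D`, hence
`⟪p, ΔS⟫ ≥ 0` almost surely. The no-arbitrage hypothesis, applied with `h = p`, therefore forces
`p = 0`, so `0 ∈ D`. An affine subspace containing `0` coincides with its direction.
-/


open MeasureTheory ProbabilityTheory Set
open scoped ENNReal InnerProductSpace

noncomputable section

/-- `d`-dimensional Euclidean space `ℝ^d`. -/
abbrev Evec (d : ℕ) : Type := EuclideanSpace ℝ (Fin d)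

/-- The history space `Ω^t = Ω_1 × ⋯ × Ω_t` (with `Ω^0` a one-point space). -/
def Hist (Ωs : ℕ → Type) : ℕ → Type
  | 0 => PUnit
  | t + 1 => Hist Ωs t × Ωs (t + 1)

/-- The product σ-algebra `ℱ_t = 𝒢_1 ⊗ ⋯ ⊗ 𝒢_t` on `Ω^t`. -/
instance histMS (Ωs : ℕ → Type) [m : ∀ t, MeasurableSpace (Ωs t)] :
    ∀ t, MeasurableSpace (Hist Ωs t)
  | 0 => inferInstanceAs (MeasurableSpace PUnit)
  | t + 1 => @Prod.instMeasurableSpace _ _ (histMS Ωs t) (m (t + 1))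

variable {Ωs : ℕ → Type} [∀ t, MeasurableSpace (Ωs t)] {d : ℕ}

/-- The measures `P_t` on `Ω^t` obtained by iterated integration of the kernels
`q_{s+1}` (here `q 0` applied to the unique point of `Ω^0` plays the role of `P_1`). -/
def Pmes (q : ∀ t, Kernel (Hist Ωs t) (Ωs (t + 1))) : ∀ t, Measure (Hist Ωs t)
  | 0 => Measure.dirac PUnit.unit
  | t + 1 => (Pmes q t).bind (fun ω => ((q t) ω).map (fun y => ((ω, y) : Hist Ωs (t + 1))))

/-- The price increment `ΔS_{t+1}(ω^t, ω_{t+1}) = S_{t+1}(ω^t,ω_{t+1}) − S_t(ω^t)`. -/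
def deltaS (S : ∀ t, Hist Ωs t → Evec d) (t : ℕ) (ω : Hist Ωs t) (y : Ωs (t + 1)) : Evec d :=
  S (t + 1) ((ω, y) : Hist Ωs (t + 1)) - S t ω

/-- `D̃^{t+1}(ω^t)`: the support of the law of `ΔS_{t+1}(ω^t, ·)` under `q_{t+1}(·|ω^t)`,
i.e. the intersection of all closed sets carrying full conditional measure. -/
def suppK (q : ∀ t, Kernel (Hist Ωs t) (Ωs (t + 1))) (S : ∀ t, Hist Ωs t → Evec d)
    (t : ℕ) (ω : Hist Ωs t) : Set (Evec d) :=
  ⋂₀ {A : Set (Evec d) | IsClosed A ∧ (q t) ω {y | deltaS S t ω y ∈ A} = 1}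

/-- `D^{t+1}(ω^t)`: the affine hull of the support `D̃^{t+1}(ω^t)`. -/
def Dset (q : ∀ t, Kernel (Hist Ωs t) (Ωs (t + 1))) (S : ∀ t, Hist Ωs t → Evec d)
    (t : ℕ) (ω : Hist Ωs t) : Set (Evec d) :=
  (affineSpan ℝ (suppK q S t ω) : Set (Evec d))

theorem measurable_deltaS {S : ∀ t, Hist Ωs t → Evec d} (hS : ∀ t, Measurable (S t))
    (t : ℕ) (ω : Hist Ωs t) : Measurable (deltaS S t ω) := by
  have hpair : Measurable (fun y : Ωs (t + 1) => ((ω, y) : Hist Ωs (t + 1))) :=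
    measurable_prodMk_left
  exact ((hS (t + 1)).comp hpair).sub_const _

/-- The increment lies almost surely in its support. The support is an intersection of possibly
uncountably many sets of full measure, so this relies on `ℝ^d` being hereditarily Lindelöf. -/
theorem ae_deltaS_mem_suppK (q : ∀ t, Kernel (Hist Ωs t) (Ωs (t + 1)))
    [∀ t, IsMarkovKernel (q t)] {S : ∀ t, Hist Ωs t → Evec d} (hS : ∀ t, Measurable (S t))
    (t : ℕ) (ω : Hist Ωs t) : ∀ᵐ y ∂(q t ω), deltaS S t ω y ∈ suppK q S t ω := by
  have hm := measurable_deltaS hS t ω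
  have hsub : ((q t ω).map (deltaS S t ω)).support ⊆ suppK q S t ω := by
    rintro x hx A ⟨hA, hA1⟩
    refine Measure.support_subset_of_isClosed hA ?_ hx
    exact (ae_map_iff hm.aemeasurable hA.measurableSet).2
      ((prob_compl_eq_zero_iff (hm hA.measurableSet)).2 hA1)
  have hae : ∀ᵐ x ∂((q t ω).map (deltaS S t ω)),
      x ∈ ((q t ω).map (deltaS S t ω)).support := Measure.support_mem_ae
  filter_upwards [ae_of_ae_map hm.aemeasurable hae] with y hy using hsub hy

/-- Fix `0 ≤ t ≤ T−1` and `ω^t ∈ Ω^t`. If for every nonzero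
`h ∈ D^{t+1}(ω^t)` one has `q_{t+1}(h·ΔS_{t+1}(ω^t,·) ≥ 0 | ω^t) < 1`, then
`0 ∈ D^{t+1}(ω^t)` and `D^{t+1}(ω^t)` is a vector subspace of `ℝ^d`. -/
theorem zero_mem_Dset_of_local_NA
    (q : ∀ t, Kernel (Hist Ωs t) (Ωs (t + 1))) [∀ t, IsMarkovKernel (q t)]
    (S : ∀ t, Hist Ωs t → Evec d) (hS : ∀ t, Measurable (S t))
    (T t : ℕ) (ht : t + 1 ≤ T) (ω : Hist Ωs t)
    (hna : ∀ h ∈ Dset q S t ω, h ≠ 0 →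
      (q t) ω {y | 0 ≤ ⟪h, deltaS S t ω y⟫_ℝ} < 1) :
    (0 : Evec d) ∈ Dset q S t ω ∧
    ∃ W : Submodule ℝ (Evec d), (W : Set (Evec d)) = Dset q S t ω := by
  have hae := ae_deltaS_mem_suppK q hS t ω
  have hne : (Dset q S t ω).Nonempty := by
    obtain ⟨y, hy⟩ := hae.exists
    exact ⟨_, subset_affineSpan ℝ _ hy⟩
  have hclosed : IsClosed (Dset q S t ω) :=
    AffineSubspace.closed_of_finiteDimensional (affineSpan ℝ (suppK q S t ω))
  have hconv : Convex ℝ (Dset q S t ω) := (affineSpan ℝ (suppK q S t ω)).convex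
  have h0 : (0 : Evec d) ∈ Dset q S t ω := by
    obtain ⟨p, hp, hmin⟩ :=
      exists_norm_eq_iInf_of_complete_convex hne hclosed.isComplete hconv 0
    rw [norm_eq_iInf_iff_real_inner_le_zero hconv hp] at hmin
    by_cases hp0 : p = 0
    · exact hp0 ▸ hp
    · refine absurd (hna p hp hp0) (not_lt.2 (ge_of_eq ?_))
      rw [← measure_univ (μ := q t ω)]
      refine measure_congr (Filter.eventuallyEq_univ.2 ?_)
      filter_upwards [hae] with y hy
      have hle := hmin _ (subset_affineSpan ℝ _ hy)
      rw [zero_sub, inner_neg_left, inner_sub_right] at hle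
      have hpp : 0 ≤ ⟪p, p⟫_ℝ := real_inner_self_nonneg
      change 0 ≤ ⟪p, deltaS S t ω y⟫_ℝ
      linarith
  refine ⟨h0, (affineSpan ℝ (suppK q S t ω)).direction, ?_⟩
  rw [AffineSubspace.coe_direction_eq_vsub_set_right h0]
  simp [Dset]
end
end

section
/- Under the one-period assumptions (quantitative no-arbitrage with constant α ∈ (0,1]; V a random utility; asymptotic elasticity with constants γ̄ ≥ 0, K > 0 and integrable C ≥ 0; and E V⁺(·, 1 + h·Y) < ∞ for all h ∈ 𝓗_1), there exists an 𝓗-measurable random variable L ≥ 0 with E L < ∞ such that for every x ≥ 0 and every h ∈ 𝓗_x: V⁺(·, x + h·Y(·)) ≤ ((2x)^{γ̄} K + 1) · L(·) Q-almost surely. -/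
/-!
The heart of the argument is that one portfolio dominates all others: there are `θ ∈ 𝓗_{1/2}` and
`lam ≥ 1` such that `1 + h·Y ≤ lam (1/2 + θ·Y)` almost surely for every `h ∈ 𝓗_{1/2}`
(`exists_dominating`).  To see this, project `h` orthogonally onto `D`, which does not change `h·Y`
because `Y ∈ D` almost surely.  By quantitative no-arbitrage the projected set `D_{1/2}` is bounded,
so its elements are combinations, with coefficients bounded by some `R`, of finitely many
`b₁, …, b_m ∈ D_{1/2}`.  As `bᵢ·Y ≥ -1/2`, we have `|bᵢ·Y| ≤ bᵢ·Y + 1`, hence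
`h·Y ≤ R ∑ᵢ (bᵢ·Y + 1)`, and a multiple of `∑ᵢ bᵢ` serves as `θ`.

Monotonicity and asymptotic elasticity then bound `V(1 + h·Y)`, uniformly in `h ∈ 𝓗_{1/2}`, by
`L₀ = K lam^γ (V⁺(1 + θ·Y) + C)`, which is integrable since `𝓗_{1/2} ⊆ 𝓗_1`.  The claim holds with
`L = L₀ + C`: for `x < 1/2` by monotonicity, and for `x ≥ 1/2` by applying asymptotic elasticity to
`x + h·Y = 2x (1/2 + (h/2x)·Y)`, where `h/2x ∈ 𝓗_{1/2}`.
-/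


open MeasureTheory ProbabilityTheory Set
open scoped ENNReal InnerProductSpace

noncomputable section

/-- The positive part of an extended real, as an element of `[0,∞]`. -/
def ePos (x : EReal) : ℝ≥0∞ := if x = ⊤ then ⊤ else ENNReal.ofReal x.toReal

/-- The generalised integral `∫ f dμ := ∫ f⁺ dμ − ∫ f⁻ dμ` of an extended-real valued
function, with values in `ℝ ∪ {±∞}`. -/
def geint {α : Type*} [MeasurableSpace α] (μ : Measure α) (f : α → EReal) : EReal :=
  ((∫⁻ a, ePos (f a) ∂μ : ℝ≥0∞) : EReal) - ((∫⁻ a, ePos (-f a) ∂μ : ℝ≥0∞) : EReal)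

variable {d : ℕ} {Ω : Type*} [MeasurableSpace Ω]

/-- The support of the law of `Y` under `Q`: the intersection of all closed sets `A`
with `Q(Y ∈ A) = 1`. -/
def suppY (Q : Measure Ω) (Y : Ω → Evec d) : Set (Evec d) :=
  ⋂₀ {A : Set (Evec d) | IsClosed A ∧ Q (Y ⁻¹' A) = 1}

/-- `D`: the smallest affine subspace of `ℝ^d` containing the support of the law of `Y`. -/
def Dv (Q : Measure Ω) (Y : Ω → Evec d) : Set (Evec d) :=
  (affineSpan ℝ (suppY Q Y) : Set (Evec d))

/-- `𝓗_x := {h ∈ ℝ^d : Q(x + h·Y ≥ 0) = 1}`. -/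
def Hx (Q : Measure Ω) (Y : Ω → Evec d) (x : ℝ) : Set (Evec d) :=
  {h | Q {ω | 0 ≤ x + ⟪h, Y ω⟫_ℝ} = 1}

/-- `D_x := 𝓗_x ∩ D`. -/
def Dx (Q : Measure Ω) (Y : Ω → Evec d) (x : ℝ) : Set (Evec d) := Hx Q Y x ∩ Dv Q Y

lemma ae_mem_Dv (Q : Measure Ω) [IsProbabilityMeasure Q] (Y : Ω → Evec d) (hY : Measurable Y) :
    ∀ᵐ ω ∂Q, Y ω ∈ Dv Q Y := by
  -- The complement of the support is a union of open null sets, so countably many of them suffice.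
  obtain ⟨T, hTc, hTs, hTU⟩ := TopologicalSpace.isOpen_sUnion_countable
    {U : Set (Evec d) | IsOpen U ∧ Q (Y ⁻¹' U) = 0} (fun U hU => hU.1)
  have h1 : ∀ᵐ ω ∂Q, ∀ U ∈ T, Y ω ∉ U := by
    rw [ae_ball_iff hTc]
    intro U hU
    have := (hTs hU).2
    rw [ae_iff]
    simpa [Set.preimage] using this
  filter_upwards [h1] with ω hω
  apply subset_affineSpan
  rintro A ⟨hA, hQA⟩
  by_contra hne
  have hmem : Y ω ∈ ⋃₀ {U : Set (Evec d) | IsOpen U ∧ Q (Y ⁻¹' U) = 0} := by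
    refine ⟨Aᶜ, ⟨hA.isOpen_compl, ?_⟩, hne⟩
    rw [Set.preimage_compl]
    exact (prob_compl_eq_zero_iff (hY hA.measurableSet)).2 hQA
  rw [← hTU] at hmem
  obtain ⟨U, hU, hYU⟩ := hmem
  exact hω U hU hYU

lemma mem_Hx_iff (Q : Measure Ω) [IsProbabilityMeasure Q] (Y : Ω → Evec d) (hY : Measurable Y)
    (x : ℝ) (h : Evec d) : h ∈ Hx Q Y x ↔ ∀ᵐ ω ∂Q, 0 ≤ x + ⟪h, Y ω⟫_ℝ := by
  have hm : MeasurableSet {ω | 0 ≤ x + ⟪h, Y ω⟫_ℝ} :=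
    measurableSet_le measurable_const (measurable_const.add (measurable_const.inner hY))
  exact (mem_ae_iff_prob_eq_one hm).symm

/-- Elements of a bounded set `S` are combinations of finitely many members of `S`, with uniformly
bounded coefficients. -/
lemma exists_bounded_combination (S : Set (Evec d)) (r : ℝ) (hS : ∀ h ∈ S, ‖h‖ ≤ r) (hr : 0 ≤ r) :
    ∃ (b : Finset (Evec d)) (R : ℝ), 0 ≤ R ∧ (∀ v ∈ b, v ∈ S) ∧
      ∀ h ∈ S, ∃ c : Evec d → ℝ, (∀ v ∈ b, |c v| ≤ R) ∧ h = ∑ v ∈ b, c v • v := by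
  classical
  obtain ⟨s, hsS, hspan, hli⟩ := exists_linearIndependent ℝ S
  have hfin : s.Finite := hli.setFinite
  have : Fintype s := hfin.fintype
  let B := Module.Basis.span hli
  let T := B.equivFunL
  let T' : Submodule.span ℝ (Set.range ((↑) : s → Evec d)) →L[ℝ] (s → ℝ) := T.toContinuousLinearMap
  refine ⟨s.toFinset, ‖T'‖ * r, mul_nonneg (norm_nonneg T') hr,
    fun v hv => hsS (by simpa using hv), ?_⟩
  intro h hh
  have hmem : h ∈ Submodule.span ℝ (Set.range ((↑) : s → Evec d)) := by
    rw [Subtype.range_coe, hspan]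
    exact Submodule.subset_span hh
  let h' : Submodule.span ℝ (Set.range ((↑) : s → Evec d)) := ⟨h, hmem⟩
  refine ⟨fun v => if hv : v ∈ s then T h' ⟨v, hv⟩ else 0, ?_, ?_⟩
  · intro v hv
    have hv' : v ∈ s := by simpa using hv
    simp only [hv', dif_pos]
    calc |T h' ⟨v, hv'⟩| ≤ ‖T h'‖ := norm_le_pi_norm (T h') ⟨v, hv'⟩
      _ ≤ ‖T'‖ * ‖h'‖ := T'.le_opNorm h'
      _ ≤ _ := by
        gcongr
        exact hS h hh
  · have h1 := congrArg Subtype.val (B.sum_equivFun h')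
    rw [← Finset.sum_coe_sort]
    have h2 : h = ∑ i : s, T h' i • (i : Evec d) := by
      rw [← show (h' : Evec d) = h from rfl, ← h1]
      simp [T, B, Module.Basis.span_apply]
    rw [h2]
    refine Fintype.sum_equiv (Equiv.subtypeEquivRight (by simp)) _ _ ?_
    rintro ⟨v, hv⟩
    simp [hv]

lemma exists_dominating (Q : Measure Ω) [IsProbabilityMeasure Q] (Y : Ω → Evec d)
    (hY : Measurable Y) (h0D : (0 : Evec d) ∈ Dv Q Y)
    (α : ℝ) (hα : α ∈ Set.Ioc (0 : ℝ) 1)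
    (hNA : ∀ h ∈ Dv Q Y, ENNReal.ofReal α ≤ Q {ω | ⟪h, Y ω⟫_ℝ ≤ -α * ‖h‖}) :
    ∃ θ ∈ Hx Q Y (1 / 2), ∃ lam : ℝ, 1 ≤ lam ∧ ∀ h ∈ Hx Q Y (1 / 2),
      ∀ᵐ ω ∂Q, 1 + ⟪h, Y ω⟫_ℝ ≤ lam * (1 / 2 + ⟪θ, Y ω⟫_ℝ) := by
  have hbdd : ∀ h ∈ Dx Q Y (1 / 2), ‖h‖ ≤ 1 / (2 * α) := by
    rintro h ⟨hh, hD⟩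
    by_contra! hlt
    have hpos := hα.1
    have h1 : 1 / 2 < α * ‖h‖ := by
      rw [div_lt_iff₀ (by positivity)] at hlt
      linarith
    have h2 : Q {ω | ⟪h, Y ω⟫_ℝ ≤ -α * ‖h‖} = 0 := by
      have h3 : ∀ᵐ ω ∂Q, ¬ ⟪h, Y ω⟫_ℝ ≤ -α * ‖h‖ := by
        filter_upwards [(mem_Hx_iff Q Y hY _ h).1 hh] with ω hω
        linarith
      simpa [ae_iff] using h3
    have h4 := hNA h hD
    rw [h2] at h4
    simp only [nonpos_iff_eq_zero, ENNReal.ofReal_eq_zero] at h4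
    linarith
  obtain ⟨b, R, hR, hbS, hrep⟩ := exists_bounded_combination (Dx Q Y (1 / 2)) (1 / (2 * α)) hbdd
    (by have := hα.1; positivity)
  have hball : ∀ᵐ ω ∂Q, ∀ v ∈ b, 0 ≤ 1 / 2 + ⟪v, Y ω⟫_ℝ := by
    rw [Filter.eventually_all_finset]
    exact fun v hv => (mem_Hx_iff Q Y hY _ v).1 (hbS v hv).1
  have hsum : ∀ᵐ ω ∂Q, -((b.card : ℝ) / 2) ≤ ∑ v ∈ b, ⟪v, Y ω⟫_ℝ := by
    filter_upwards [hball] with ω hω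
    have : ∑ v ∈ b, (-(1 / 2) : ℝ) ≤ ∑ v ∈ b, ⟪v, Y ω⟫_ℝ :=
      Finset.sum_le_sum fun v hv => by linarith [hω v hv]
    simp only [Finset.sum_const, nsmul_eq_mul] at this
    linarith
  -- The factor `1 / 2` keeps `1/2 + θ·Y` bounded away from zero; `card + 1` covers the empty family.
  have hcard : (0 : ℝ) ≤ b.card := by positivity
  have hθ : ∀ ω, ⟪(1 / (2 * ((b.card : ℝ) + 1))) • ∑ v ∈ b, v, Y ω⟫_ℝ =
      1 / (2 * ((b.card : ℝ) + 1)) * ∑ v ∈ b, ⟪v, Y ω⟫_ℝ := by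
    intro ω
    rw [real_inner_smul_left, sum_inner]
  refine ⟨(1 / (2 * ((b.card : ℝ) + 1))) • ∑ v ∈ b, v, ?_,
    2 * ((b.card : ℝ) + 1) * (R + 1), by nlinarith, ?_⟩
  · rw [mem_Hx_iff Q Y hY]
    filter_upwards [hsum] with ω hω
    rw [hθ]
    have : 1 / 2 + 1 / (2 * ((b.card : ℝ) + 1)) * ∑ v ∈ b, ⟪v, Y ω⟫_ℝ =
      (b.card + 1 + ∑ v ∈ b, ⟪v, Y ω⟫_ℝ) / (2 * ((b.card : ℝ) + 1)) := by
      field_simp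
    rw [this]
    apply div_nonneg <;> linarith
  · intro h hh
    let W := (affineSpan ℝ (suppY Q Y)).direction
    have hW : ∀ v, v ∈ Dv Q Y ↔ v ∈ W := by
      intro v
      have := AffineSubspace.vsub_right_mem_direction_iff_mem (s := affineSpan ℝ (suppY Q Y)) h0D v
      rw [vsub_eq_sub, sub_zero] at this
      exact this.symm
    have hproj : ∀ᵐ ω ∂Q, ⟪W.starProjection h, Y ω⟫_ℝ = ⟪h, Y ω⟫_ℝ := by
      filter_upwards [ae_mem_Dv Q Y hY] with ω hω
      rw [Submodule.inner_starProjection_left_eq_right,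
        Submodule.starProjection_eq_self_iff.2 ((hW _).1 hω)]
    have hDx : W.starProjection h ∈ Dx Q Y (1 / 2) := by
      refine ⟨?_, (hW _).2 (Submodule.starProjection_apply_mem W h)⟩
      rw [mem_Hx_iff Q Y hY] at hh ⊢
      filter_upwards [hh, hproj] with ω h1 h2
      rwa [h2]
    obtain ⟨c, hc, hrepr⟩ := hrep _ hDx
    filter_upwards [hproj, hball, hsum] with ω h1 h2 h3
    rw [hθ, ← h1, hrepr, sum_inner]
    have h4 : ∑ v ∈ b, ⟪c v • v, Y ω⟫_ℝ ≤ ∑ v ∈ b, R * (⟪v, Y ω⟫_ℝ + 1) := by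
      refine Finset.sum_le_sum fun v hv => ?_
      rw [real_inner_smul_left]
      have h5 : |⟪v, Y ω⟫_ℝ| ≤ ⟪v, Y ω⟫_ℝ + 1 := by
        rw [abs_le]
        constructor <;> linarith [h2 v hv]
      calc c v * ⟪v, Y ω⟫_ℝ ≤ |c v| * |⟪v, Y ω⟫_ℝ| := by
            rw [← abs_mul]
            exact le_abs_self _
        _ ≤ _ := mul_le_mul (hc v hv) h5 (abs_nonneg _) hR
    rw [← Finset.mul_sum, Finset.sum_add_distrib] at h4
    simp only [Finset.sum_const, nsmul_eq_mul, mul_one] at h4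
    have h6 : 2 * ((b.card : ℝ) + 1) * (R + 1) *
        (1 / 2 + 1 / (2 * ((b.card : ℝ) + 1)) * ∑ v ∈ b, ⟪v, Y ω⟫_ℝ) =
        (b.card + 1) * (R + 1) + (R + 1) * ∑ v ∈ b, ⟪v, Y ω⟫_ℝ := by
      field_simp
    rw [h6]
    nlinarith

/-- Monotonicity and upper semicontinuity make `V ω` right-continuous, so `V ω (f ω)` is an infimum
over rational arguments. -/
lemma measurable_comp_utility (V : Ω → ℝ → EReal) (hVmeas : ∀ x : ℝ, Measurable fun ω => V ω x)
    (hVmono : ∀ ω, Monotone (V ω)) (hVusc : ∀ ω, UpperSemicontinuous (V ω))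
    (f : Ω → ℝ) (hf : Measurable f) : Measurable fun ω => V ω (f ω) := by
  classical
  have h1 : (fun ω => V ω (f ω)) = fun ω => ⨅ q : ℚ, if f ω < q then V ω q else ⊤ := by
    funext ω
    apply le_antisymm
    · refine le_iInf fun q => ?_
      split_ifs with h
      · exact hVmono ω h.le
      · exact le_top
    · refine le_of_forall_gt fun c hc => ?_
      have h2 := hVusc ω (f ω) c hc
      obtain ⟨ε, hε, hball⟩ := Metric.eventually_nhds_iff.1 h2
      obtain ⟨q, hq1, hq2⟩ := exists_rat_btwn (show f ω < f ω + ε by linarith)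
      refine lt_of_le_of_lt (iInf_le _ q) ?_
      rw [if_pos hq1]
      apply hball
      rw [Real.dist_eq, abs_lt]
      constructor <;> linarith
  rw [h1]
  exact Measurable.iInf fun q =>
    Measurable.ite (measurableSet_lt hf measurable_const) (hVmeas q) measurable_const

lemma measurable_ePos : Measurable ePos :=
  Measurable.ite (measurableSet_singleton _) measurable_const
    (ENNReal.measurable_ofReal.comp measurable_ereal_toReal)

lemma max_zero_le_ePos (x : EReal) (hx : ePos x < ⊤) :
    max x 0 ≤ (((ePos x).toReal : ℝ) : EReal) := by
  induction x with
  | bot => simp [ePos]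
  | top => simp [ePos] at hx
  | coe x =>
    have : (ePos (x : EReal)).toReal = max x 0 := by
      simp [ePos, ENNReal.toReal_ofReal']
    rw [this]
    exact_mod_cast le_rfl

/-- Under the one-period assumptions (quantitative no-arbitrage,
`V` a random utility, asymptotic elasticity, and `E V⁺(·, 1 + h·Y) < ∞` for all
`h ∈ 𝓗_1`), there is an `𝓗`-measurable `L ≥ 0` with `E L < ∞` such that for all
`x ≥ 0` and `h ∈ 𝓗_x`: `V⁺(·, x + h·Y) ≤ ((2x)^γ̄ K + 1) L` `Q`-a.s. -/
theorem uniform_bound_on_positive_part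
    (Q : Measure Ω) [IsProbabilityMeasure Q] (Y : Ω → Evec d) (hY : Measurable Y)
    (h0D : (0 : Evec d) ∈ Dv Q Y)
    (α : ℝ) (hα : α ∈ Set.Ioc (0 : ℝ) 1)
    (hNA : ∀ h ∈ Dv Q Y, ENNReal.ofReal α ≤ Q {ω | ⟪h, Y ω⟫_ℝ ≤ -α * ‖h‖})
    (V : Ω → ℝ → EReal)
    (hVmeas : ∀ x : ℝ, Measurable fun ω => V ω x)
    (hVmono : ∀ ω, Monotone (V ω))
    (hVusc : ∀ ω, UpperSemicontinuous (V ω))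
    (hVneg : ∀ ω, ∀ x : ℝ, x < 0 → V ω x = ⊥)
    (γ K : ℝ) (hγ : 0 ≤ γ) (hK : 0 < K)
    (C : Ω → ℝ) (hCmeas : Measurable C) (hC0 : ∀ ω, 0 ≤ C ω) (hCint : Integrable C Q)
    (hAE : ∀ ω, ∀ lam x : ℝ, 1 ≤ lam →
      V ω (lam * x) ≤ ((K * lam ^ γ : ℝ) : EReal) * (V ω (x + 1 / 2) + (C ω : EReal)))
    (hInt1 : ∀ h ∈ Hx Q Y 1, ∫⁻ ω, ePos (V ω (1 + ⟪h, Y ω⟫_ℝ)) ∂Q < ⊤)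
 :
    ∃ L : Ω → ℝ, Measurable L ∧ (∀ ω, 0 ≤ L ω) ∧ Integrable L Q ∧
      ∀ x : ℝ, 0 ≤ x → ∀ h ∈ Hx Q Y x,
        ∀ᵐ ω ∂Q, max (V ω (x + ⟪h, Y ω⟫_ℝ)) 0 ≤
          ((((2 * x) ^ γ * K + 1) * L ω : ℝ) : EReal) := by
  obtain ⟨θ, hθ, lam, hlam, hdom⟩ := exists_dominating Q Y hY h0D α hα hNA
  have hθ1 : θ ∈ Hx Q Y 1 := by
    rw [mem_Hx_iff Q Y hY] at hθ ⊢
    filter_upwards [hθ] with ω hω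
    linarith
  have hfm : Measurable fun ω => ePos (V ω (1 + ⟪θ, Y ω⟫_ℝ)) :=
    measurable_ePos.comp (measurable_comp_utility V hVmeas hVmono hVusc _
      (measurable_const.add (measurable_const.inner hY)))
  set G : Ω → ℝ := fun ω => (ePos (V ω (1 + ⟪θ, Y ω⟫_ℝ))).toReal with hG
  have hGmeas : Measurable G := hfm.ennreal_toReal
  have hG0 : ∀ ω, 0 ≤ G ω := fun ω => ENNReal.toReal_nonneg
  have hGint : Integrable G Q :=
    integrable_toReal_of_lintegral_ne_top hfm.aemeasurable (hInt1 θ hθ1).ne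
  have hGle : ∀ᵐ ω ∂Q, max (V ω (1 + ⟪θ, Y ω⟫_ℝ)) 0 ≤ (G ω : EReal) := by
    filter_upwards [ae_lt_top hfm (hInt1 θ hθ1).ne] with ω hω
    exact max_zero_le_ePos _ hω
  have hkey : ∀ ω, ∀ l y g : ℝ, 1 ≤ l → V ω (y + 1 / 2) ≤ (g : EReal) →
      V ω (l * y) ≤ ((K * l ^ γ * (g + C ω) : ℝ) : EReal) := by
    intro ω l y g hl hg
    refine (hAE ω l y hl).trans ?_
    rw [EReal.coe_mul _ (g + C ω), EReal.coe_add]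
    have hl0 : 0 ≤ K * l ^ γ := mul_nonneg hK.le (Real.rpow_nonneg (by linarith) _)
    exact mul_le_mul_of_nonneg_left (add_le_add_left hg _) (EReal.coe_nonneg.2 hl0)
  have hM : 0 ≤ K * lam ^ γ := mul_nonneg hK.le (Real.rpow_nonneg (by linarith) _)
  have hL00 : ∀ ω, 0 ≤ K * lam ^ γ * (G ω + C ω) :=
    fun ω => mul_nonneg hM (add_nonneg (hG0 ω) (hC0 ω))
  have hunif : ∀ h ∈ Hx Q Y (1 / 2), ∀ᵐ ω ∂Q,
      V ω (1 + ⟪h, Y ω⟫_ℝ) ≤ ((K * lam ^ γ * (G ω + C ω) : ℝ) : EReal) := by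
    intro h hh
    filter_upwards [hdom h hh, hGle] with ω h1 h2
    refine (hVmono ω h1).trans (hkey ω lam _ _ hlam ?_)
    rw [show 1 / 2 + ⟪θ, Y ω⟫_ℝ + 1 / 2 = 1 + ⟪θ, Y ω⟫_ℝ by ring]
    exact (le_max_left _ _).trans h2
  refine ⟨fun ω => K * lam ^ γ * (G ω + C ω) + C ω,
    ((hGmeas.add hCmeas).const_mul _).add hCmeas, fun ω => add_nonneg (hL00 ω) (hC0 ω),
    ((hGint.add hCint).const_mul _).add hCint, ?_⟩
  intro x hx h hh
  have hA : 0 ≤ (2 * x) ^ γ * K := mul_nonneg (Real.rpow_nonneg (by linarith) _) hK.le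
  have hL0 : ∀ ω, 0 ≤ K * lam ^ γ * (G ω + C ω) + C ω := fun ω => add_nonneg (hL00 ω) (hC0 ω)
  rw [mem_Hx_iff Q Y hY] at hh
  rcases lt_or_ge x (1 / 2) with hx2 | hx2
  · have hh' : h ∈ Hx Q Y (1 / 2) := by
      rw [mem_Hx_iff Q Y hY]
      filter_upwards [hh] with ω hω
      linarith
    filter_upwards [hunif h hh'] with ω hω
    refine max_le ?_ (EReal.coe_nonneg.2 (mul_nonneg (by linarith) (hL0 ω)))
    refine (hVmono ω (show x + ⟪h, Y ω⟫_ℝ ≤ 1 + ⟪h, Y ω⟫_ℝ by linarith)).trans (hω.trans ?_)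
    rw [EReal.coe_le_coe_iff]
    nlinarith [mul_nonneg hA (hL0 ω), hC0 ω]
  · have hxpos : 0 < 2 * x := by linarith
    have hinner : ∀ ω, ⟪(1 / (2 * x)) • h, Y ω⟫_ℝ = 1 / (2 * x) * ⟪h, Y ω⟫_ℝ :=
      fun ω => real_inner_smul_left _ _ _
    have hsplit : ∀ ω, x + ⟪h, Y ω⟫_ℝ = 2 * x * (1 / 2 + ⟪(1 / (2 * x)) • h, Y ω⟫_ℝ) := by
      intro ω
      rw [hinner]
      field_simp
    have hh' : (1 / (2 * x)) • h ∈ Hx Q Y (1 / 2) := by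
      rw [mem_Hx_iff Q Y hY]
      filter_upwards [hh] with ω hω
      rw [hsplit] at hω
      exact nonneg_of_mul_nonneg_right hω hxpos
    filter_upwards [hunif _ hh'] with ω hω
    refine max_le ?_ (EReal.coe_nonneg.2 (mul_nonneg (by linarith) (hL0 ω)))
    rw [hsplit]
    refine (hkey ω (2 * x) _ (K * lam ^ γ * (G ω + C ω)) (by linarith) ?_).trans ?_
    · rwa [show 1 / 2 + ⟪(1 / (2 * x)) • h, Y ω⟫_ℝ + 1 / 2
        = 1 + ⟪(1 / (2 * x)) • h, Y ω⟫_ℝ by ring]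
    · rw [EReal.coe_le_coe_iff]
      nlinarith [hL0 ω]
end
end
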